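/- Let d ≥ 1, let H = ℂ^d, and let r be a natural number. For each permutation σ of {1,…,r}, let θ(σ) denote the ℂ-linear automorphism of H^{⊗r} that permutes the tensor factors according to σ. If t : H^{⊗r} → H^{⊗r} is a ℂ-linear map such that u^{⊗r} ∘ t = t ∘ u^{⊗r} for every unitary operator u on H, then t lies in the ℂ-linear span of the operators {θ(σ) : σ a permutation of {1,…,r}}. -/

import Mathlib

open scoped TensorProduct

section helpers

open MvPolynomial in
/-- The polynomial `z ↦ M (∑ zᵢ aᵢ, …, ∑ zᵢ aᵢ)`. -/
noncomputable def diagPoly {r : ℕ} {n E : Type*} [Fintype n] [AddCommGroup E] [Module ℂ E]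
    (M : MultilinearMap ℂ (fun _ : Fin r => E) ℂ) (a : n → E) : MvPolynomial n ℂ :=
  ∑ f : Fin r → n, C (M fun j => a (f j)) * ∏ j, X (f j)

lemma diagPoly_eval {r : ℕ} {n E : Type*} [Fintype n] [AddCommGroup E] [Module ℂ E]
    (M : MultilinearMap ℂ (fun _ : Fin r => E) ℂ) (a : n → E) (z : n → ℂ) :
    MvPolynomial.eval z (diagPoly M a) = M fun _ => ∑ i, z i • a i := by
  classical
  rw [MultilinearMap.map_sum]
  simp only [MultilinearMap.map_smul_univ, diagPoly, map_sum, map_mul, MvPolynomial.eval_C,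
    map_prod, MvPolynomial.eval_X, smul_eq_mul]
  exact Finset.sum_congr rfl fun f _ => mul_comm _ _

lemma diagPoly_eq_zero {r : ℕ} {n E : Type*} [Fintype n] [AddCommGroup E] [Module ℂ E]
    (M : MultilinearMap ℂ (fun _ : Fin r => E) ℂ) (a : n → E) (s : Set ℂ) (hs : s.Infinite)
    (h : ∀ z : n → ℂ, (∀ i, z i ∈ s) → (M fun _ => ∑ i, z i • a i) = 0) :
    diagPoly M a = 0 := by
  apply MvPolynomial.funext_set (fun _ => s) (fun _ => hs)
  intro z hz
  rw [diagPoly_eval, map_zero]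
  exact h z fun i => hz i trivial

lemma diag_zero_of_set {r : ℕ} {n E F : Type*} [Fintype n] [AddCommGroup E] [Module ℂ E]
    [AddCommGroup F] [Module ℂ F]
    (M : MultilinearMap ℂ (fun _ : Fin r => E) F) (a : n → E) (s : Set ℂ) (hs : s.Infinite)
    (h : ∀ z : n → ℂ, (∀ i, z i ∈ s) → (M fun _ => ∑ i, z i • a i) = 0) (z : n → ℂ) :
    (M fun _ => ∑ i, z i • a i) = 0 := by
  rw [← Module.forall_dual_apply_eq_zero_iff ℂ]
  intro φ
  have := diagPoly_eval (φ.compMultilinearMap M) a z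
  rw [diagPoly_eq_zero (φ.compMultilinearMap M) a s hs] at this
  · simpa using this.symm
  · intro z hz
    simp [h z hz]

lemma symm_zero_of_diag {r : ℕ} {E F : Type*} [AddCommGroup E] [Module ℂ E]
    [AddCommGroup F] [Module ℂ F]
    (M : MultilinearMap ℂ (fun _ : Fin r => E) F)
    (h : ∀ a, (M fun _ => a) = 0) (b : Fin r → E) :
    ∑ σ : Equiv.Perm (Fin r), M (fun i => b (σ i)) = 0 := by
  classical
  rw [← Module.forall_dual_apply_eq_zero_iff ℂ]
  intro φ
  have h0 := diagPoly_eq_zero (φ.compMultilinearMap M) b Set.univ Set.infinite_univ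
    (by intro z _; simp [h])
  have h1 := congrArg (MvPolynomial.coeff (∑ j : Fin r, Finsupp.single j 1)) h0
  have hX : ∀ f : Fin r → Fin r, (∏ j, (MvPolynomial.X (f j) : MvPolynomial (Fin r) ℂ))
      = MvPolynomial.monomial (∑ j, Finsupp.single (f j) 1) 1 := by
    intro f
    rw [MvPolynomial.monomial_sum_one]; rfl
  have hf : ∀ f : Fin r → Fin r, (∑ j, Finsupp.single (f j) (1 : ℕ)) = ∑ j, Finsupp.single j 1
      ↔ Function.Bijective f := by
    intro f
    constructor
    · intro hh
      apply Function.Surjective.bijective_of_finite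
      intro i
      by_contra hi
      push Not at hi
      have := DFunLike.congr_fun hh i
      simp [Finsupp.finsetSum_apply, Finsupp.single_apply, hi] at this
    · intro hh
      exact (Equiv.ofBijective f hh).sum_comp (fun j => Finsupp.single j (1 : ℕ))
  simp only [diagPoly, MvPolynomial.coeff_sum, MvPolynomial.coeff_C_mul, hX,
    MvPolynomial.coeff_monomial, MvPolynomial.coeff_zero, hf, mul_ite, mul_one, mul_zero] at h1
  rw [← Finset.sum_filter] at h1
  rw [map_sum, ← h1]
  refine Finset.sum_bij (fun σ _ => ⇑σ) ?_ ?_ ?_ ?_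
  · intro σ _; exact Finset.mem_filter.2 ⟨Finset.mem_univ _, σ.bijective⟩
  · intro σ _ τ _ h; exact DFunLike.coe_injective h
  · intro f hf
    simp only [Finset.mem_filter] at hf
    exact ⟨Equiv.ofBijective f hf.2, Finset.mem_univ _, rfl⟩
  · intro σ _; rfl

/-- Double commutant theorem for finite groups. -/
lemma double_commutant {G V : Type*} [Group G] [Fintype G] [AddCommGroup V] [Module ℂ V]
    [FiniteDimensional ℂ V] (θ : G →* Module.End ℂ V) (t : Module.End ℂ V)
    (ht : ∀ s : Module.End ℂ V, (∀ g, θ g * s = s * θ g) → s * t = t * s) :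
    t ∈ Submodule.span ℂ (Set.range θ) := by
  classical
  let ι := Module.Free.ChooseBasisIndex ℂ V
  let v : Module.Basis ι ℂ V := Module.Free.chooseBasis ℂ V
  let S := Submodule.span ℂ (Set.range θ)
  have hmul : ∀ g, ∀ s ∈ S, θ g * s ∈ S := by
    intro g s hs
    induction hs using Submodule.span_induction with
    | mem x hx =>
      obtain ⟨k, rfl⟩ := hx
      rw [← map_mul]; exact Submodule.subset_span ⟨_, rfl⟩
    | zero => simp
    | add x y _ _ hx hy => rw [mul_add]; exact S.add_mem hx hy
    | smul c x _ hx => rw [mul_smul_comm]; exact S.smul_mem _ hx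
  let ev : Module.End ℂ V →ₗ[ℂ] (ι → V) := LinearMap.pi fun i => LinearMap.applyₗ (v i)
  have hev : ∀ s i, ev s i = s (v i) := fun s i => rfl
  let W : Submodule ℂ (ι → V) := S.map ev
  let θ' : G → Module.End ℂ (ι → V) := fun g => (θ g).compLeft ι
  have hθ'a : ∀ g x i, θ' g x i = θ g (x i) := fun _ _ _ => rfl
  have hθW : ∀ g, ∀ w ∈ W, θ' g w ∈ W := by
    rintro g _ ⟨s, hs, rfl⟩
    exact ⟨θ g * s, hmul g s hs, rfl⟩
  have hθmul : ∀ g k x, θ' (g * k) x = θ' g (θ' k x) := by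
    intro g k x; ext i; simp [hθ'a]
  have hθ1 : ∀ x, θ' 1 x = x := by
    intro x; ext i; simp [hθ'a]
  obtain ⟨p0, hp0⟩ := W.subtype.exists_leftInverse_of_injective W.ker_subtype
  have hp0' : ∀ w ∈ W, (p0 w : ι → V) = w := fun w hw => by
    have := LinearMap.congr_fun hp0 ⟨w, hw⟩
    exact congrArg Subtype.val this
  let p : Module.End ℂ (ι → V) :=
    ∑ g : G, θ' g * (W.subtype ∘ₗ p0) * θ' g⁻¹
  have hpa : ∀ x, p x = ∑ g : G, θ' g (p0 (θ' g⁻¹ x) : ι → V) := by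
    intro x; simp [p, LinearMap.sum_apply]
  have hpW : ∀ x, p x ∈ W := by
    intro x; rw [hpa]
    exact W.sum_mem fun g _ => hθW g _ (p0 _).2
  have hpid : ∀ w ∈ W, p w = (Fintype.card G : ℂ) • w := by
    intro w hw
    rw [hpa]
    have : ∀ g, θ' g (p0 (θ' g⁻¹ w) : ι → V) = w := by
      intro g
      rw [hp0' _ (hθW _ _ hw), ← hθmul, mul_inv_cancel, hθ1]
    simp [this, Finset.card_univ, Nat.cast_smul_eq_nsmul]
  have hpθ : ∀ k x, p (θ' k x) = θ' k (p x) := by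
    intro k x
    rw [hpa, hpa, map_sum]
    rw [← Equiv.sum_comp (Equiv.mulLeft k)]
    refine Finset.sum_congr rfl fun g _ => ?_
    simp only [Equiv.coe_mulLeft, mul_inv_rev]
    rw [← hθmul (g⁻¹ * k⁻¹), ← hθmul]
    simp
  let t' : Module.End ℂ (ι → V) := t.compLeft ι
  have ht'a : ∀ x i, t' x i = t (x i) := fun _ _ => rfl
  have hpt : ∀ x, p (t' x) = t' (p x) := by
    intro x
    have hx : x = ∑ j, Pi.single j (x j) := (Finset.univ_sum_single x).symm
    have htx : t' x = ∑ j, Pi.single j (t (x j)) := (Finset.univ_sum_single (t' x)).symm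
    rw [htx]
    conv_rhs => rw [hx]
    simp only [map_sum]
    refine Finset.sum_congr rfl fun j _ => ?_
    ext i
    rw [ht'a]
    have := ht (LinearMap.proj i ∘ₗ p ∘ₗ LinearMap.single ℂ (fun _ => V) j) (by
      intro g
      ext y
      have h1 : (Pi.single j (θ g y) : ι → V) = θ' g (Pi.single j y) := by
        ext k
        rw [hθ'a]
        by_cases hk : k = j
        · subst hk; simp
        · simp [hk]
      simp [h1, hpθ, hθ'a])
    exact LinearMap.congr_fun this (x j)
  have hv : ev 1 ∈ W := ⟨1, by
    rw [← map_one θ]; exact Submodule.subset_span ⟨1, rfl⟩, rfl⟩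
  have htv : (Fintype.card G : ℂ) • t' (ev 1) ∈ W := by
    rw [← map_smul, ← hpid _ hv, ← hpt]
    exact hpW _
  have hc : (Fintype.card G : ℂ) ≠ 0 := by simp
  have htv' := W.smul_mem (Fintype.card G : ℂ)⁻¹ htv
  rw [smul_smul, inv_mul_cancel₀ hc, one_smul] at htv'
  obtain ⟨s, hs, hst⟩ := htv'
  have : t = s := v.ext fun i => (congrFun hst i).symm
  rw [this]; exact hs

lemma diag_zero_of_unitary {d r : ℕ} {F : Type*} [AddCommGroup F] [Module ℂ F]
    (M : MultilinearMap ℂ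
      (fun _ : Fin r => EuclideanSpace ℂ (Fin d) →ₗ[ℂ] EuclideanSpace ℂ (Fin d)) F)
    (h : ∀ u : EuclideanSpace ℂ (Fin d) ≃ₗᵢ[ℂ] EuclideanSpace ℂ (Fin d),
      (M fun _ => (u.toLinearEquiv : EuclideanSpace ℂ (Fin d) →ₗ[ℂ] EuclideanSpace ℂ (Fin d))) = 0)
    (a : EuclideanSpace ℂ (Fin d) →ₗ[ℂ] EuclideanSpace ℂ (Fin d)) : (M fun _ => a) = 0 := by
  classical
  have hsymm : ∀ T : EuclideanSpace ℂ (Fin d) →ₗ[ℂ] EuclideanSpace ℂ (Fin d), T.IsSymmetric →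
      (M fun _ => T) = 0 := by
    intro T hT
    have hn : Module.finrank ℂ (EuclideanSpace ℂ (Fin d)) = d := by simp
    let e := hT.eigenvectorBasis hn
    let P : Fin d → EuclideanSpace ℂ (Fin d) →ₗ[ℂ] EuclideanSpace ℂ (Fin d) :=
      fun i => (e.toBasis.coord i).smulRight (e i)
    have hP : ∀ (z : Fin d → ℂ) j, (∑ i, z i • P i) (e j) = z j • e j := by
      intro z j
      have : ∀ i, P i (e j) = if i = j then e i else 0 := by
        intro i
        have h1 : e.toBasis.coord i (e j) = if i = j then 1 else 0 := by
          rw [← OrthonormalBasis.coe_toBasis, Module.Basis.coord_apply, Module.Basis.repr_self,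
            Finsupp.single_apply]
          simp only [eq_comm]
        simp only [P, LinearMap.smulRight_apply, h1]
        split_ifs <;> simp
      simp [LinearMap.sum_apply, this]
    have hTP : T = ∑ i, ((hT.eigenvalues hn i : ℝ) : ℂ) • P i := by
      refine e.toBasis.ext fun j => ?_
      rw [OrthonormalBasis.coe_toBasis, hP]
      exact hT.apply_eigenvectorBasis hn j
    rw [hTP]
    refine diag_zero_of_set M P (Metric.sphere 0 1) ?_ ?_ _
    · refine Set.infinite_of_injective_forall_mem
        (f := fun n : ℕ => Complex.exp (((n : ℝ) : ℂ) * Complex.I)) ?_ ?_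
      · intro m n hmn
        simp only [Complex.exp_eq_exp_iff_exists_int] at hmn
        obtain ⟨k, hk⟩ := hmn
        have h2 : (m : ℝ) = n + k * (2 * Real.pi) := by
          have := congrArg Complex.im hk
          simpa using this
        by_contra hne
        have hk0 : k ≠ 0 := by
          rintro rfl
          apply hne
          exact_mod_cast (by simpa using h2 : (m : ℝ) = n)
        apply irrational_pi
        refine ⟨((m : ℚ) - n) / (2 * k), ?_⟩
        have : (k : ℝ) ≠ 0 := by exact_mod_cast hk0
        push_cast
        field_simp
        linarith
      · intro n
        rw [mem_sphere_zero_iff_norm]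
        exact Complex.norm_exp_ofReal_mul_I _
    · intro z hz
      have hz' : ∀ i, ‖z i‖ = 1 := fun i => by simpa using hz i
      let L := ∑ i, z i • P i
      have hL : Orthonormal ℂ (L ∘ e.toBasis) := by
        have he := e.orthonormal
        rw [orthonormal_iff_ite] at he ⊢
        intro i j
        simp only [Function.comp, OrthonormalBasis.coe_toBasis, L, hP, inner_smul_left,
          inner_smul_right, he]
        split_ifs with hij
        · subst hij
          simp [mul_comm, Complex.mul_conj, Complex.normSq_eq_norm_sq, hz']
        · simp
      let I := L.isometryOfOrthonormal (v := e.toBasis) (by simp) hL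
      exact h (I.toLinearIsometryEquiv rfl)
  have := diag_zero_of_set M ![((realPart a : _) : EuclideanSpace ℂ (Fin d) →ₗ[ℂ] EuclideanSpace ℂ (Fin d)), (imaginaryPart a : _)]
    (Set.range ((↑) : ℝ → ℂ)) (Set.infinite_range_of_injective Complex.ofReal_injective) ?_
    ![1, Complex.I]
  · simpa [realPart_add_I_smul_imaginaryPart] using this
  · intro z hz
    apply hsymm
    choose x hx using hz
    rw [LinearMap.isSymmetric_iff_isSelfAdjoint]
    have h1 := (realPart a).2
    have h2 := (imaginaryPart a).2
    simp only [Fin.sum_univ_two, ← hx]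
    refine IsSelfAdjoint.add ?_ ?_
    · exact IsSelfAdjoint.smul (Complex.conj_ofReal _) h1
    · exact IsSelfAdjoint.smul (Complex.conj_ofReal _) h2

lemma map_span {d r : ℕ} (s : Module.End ℂ (⨂[ℂ] _ : Fin r, EuclideanSpace ℂ (Fin d))) :
    s ∈ Submodule.span ℂ (Set.range fun b : Fin r → (EuclideanSpace ℂ (Fin d) →ₗ[ℂ]
      EuclideanSpace ℂ (Fin d)) => PiTensorProduct.map b) := by
  classical
  let e := (EuclideanSpace.basisFun (Fin d) ℂ).toBasis
  let B := Basis.piTensorProduct (fun _ : Fin r => e)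
  have hB : ∀ p, B p = PiTensorProduct.tprod ℂ fun i => e (p i) :=
    fun p => Basis.piTensorProduct_apply (fun _ : Fin r => e) p
  have hm : ∀ p q : Fin r → Fin d, ∀ k, PiTensorProduct.map (fun i => (e.coord (p i)).smulRight (e (q i))) (B k)
      = if k = p then B q else 0 := by
    intro p q k
    rw [hB, PiTensorProduct.map_tprod]
    simp only [LinearMap.smulRight_apply, MultilinearMap.map_smul_univ, ← hB]
    simp only [Module.Basis.coord_apply, Module.Basis.repr_self, Finsupp.single_apply,
      Fintype.prod_ite_zero, Finset.prod_const_one, ← funext_iff]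
    split_ifs <;> simp
  have : s = ∑ p, ∑ q, (B.repr (s (B p)) q) •
      PiTensorProduct.map (fun i => (e.coord (p i)).smulRight (e (q i))) := by
    refine B.ext fun k => ?_
    simp only [LinearMap.sum_apply, LinearMap.smul_apply, hm]
    simp [B.sum_repr]
  rw [this]
  exact Submodule.sum_mem _ fun p _ => Submodule.sum_mem _ fun q _ =>
    Submodule.smul_mem _ _ (Submodule.subset_span ⟨_, rfl⟩)

/-- The action of the symmetric group on a tensor power. -/
noncomputable def permHom (r d : ℕ) :
    Equiv.Perm (Fin r) →* Module.End ℂ (⨂[ℂ] _ : Fin r, EuclideanSpace ℂ (Fin d)) where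
  toFun σ := (PiTensorProduct.reindex ℂ (fun _ : Fin r => EuclideanSpace ℂ (Fin d)) σ).toLinearMap
  map_one' := by
    ext x
    simp [Equiv.Perm.one_def]
  map_mul' σ τ := by
    ext x
    simp [Equiv.Perm.mul_def, PiTensorProduct.reindex_tprod]
    rfl

lemma permHom_conj {r d : ℕ} (σ : Equiv.Perm (Fin r))
    (b : Fin r → (EuclideanSpace ℂ (Fin d) →ₗ[ℂ] EuclideanSpace ℂ (Fin d))) :
    permHom r d σ⁻¹ * PiTensorProduct.map b * permHom r d σ =
      PiTensorProduct.map (fun i => b (σ i)) := by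
  ext x
  simp [permHom, PiTensorProduct.reindex_tprod, Equiv.Perm.inv_def]
  congr 1
  funext i
  rw [Equiv.symm_apply_apply]

end helpers

/-- Let `d ≥ 1`, `H = ℂ^d`, `r ∈ ℕ`, and for `σ ∈ S_r` let `θ(σ)` be the linear
automorphism of `H^{⊗r}` permuting the tensor factors according to `σ`.  If a `ℂ`-linear map
`t : H^{⊗r} → H^{⊗r}` commutes with `u^{⊗r}` for every unitary `u` on `H`, then `t` lies in
the `ℂ`-linear span of `{θ(σ) : σ ∈ S_r}`. -/
theorem stmt9 (d : ℕ) (hd : 1 ≤ d) (r : ℕ)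
    (t : (⨂[ℂ] _ : Fin r, EuclideanSpace ℂ (Fin d)) →ₗ[ℂ]
         ⨂[ℂ] _ : Fin r, EuclideanSpace ℂ (Fin d))
    (ht : ∀ u : EuclideanSpace ℂ (Fin d) ≃ₗᵢ[ℂ] EuclideanSpace ℂ (Fin d),
      (PiTensorProduct.map fun _ : Fin r =>
          (u.toLinearEquiv : EuclideanSpace ℂ (Fin d) →ₗ[ℂ] EuclideanSpace ℂ (Fin d))).comp t =
        t.comp (PiTensorProduct.map fun _ : Fin r =>
          (u.toLinearEquiv : EuclideanSpace ℂ (Fin d) →ₗ[ℂ] EuclideanSpace ℂ (Fin d)))) :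
    t ∈ Submodule.span ℂ
      (Set.range fun σ : Equiv.Perm (Fin r) =>
        ((PiTensorProduct.reindex ℂ (fun _ : Fin r => EuclideanSpace ℂ (Fin d)) σ).toLinearMap :
          (⨂[ℂ] _ : Fin r, EuclideanSpace ℂ (Fin d)) →ₗ[ℂ]
          ⨂[ℂ] _ : Fin r, EuclideanSpace ℂ (Fin d))) := by
  classical
  have hfd : FiniteDimensional ℂ (⨂[ℂ] _ : Fin r, EuclideanSpace ℂ (Fin d)) :=
    Module.Basis.finiteDimensional_of_finite
      (Basis.piTensorProduct (fun _ : Fin r => (EuclideanSpace.basisFun (Fin d) ℂ).toBasis))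
  refine double_commutant (permHom r d) t ?_
  -- the commutator with `t`, as a linear map
  let c : Module.End ℂ (⨂[ℂ] _ : Fin r, EuclideanSpace ℂ (Fin d)) →ₗ[ℂ]
      Module.End ℂ (⨂[ℂ] _ : Fin r, EuclideanSpace ℂ (Fin d)) :=
    LinearMap.mulRight ℂ t - LinearMap.mulLeft ℂ t
  have hc : ∀ s, c s = s * t - t * s := fun s => rfl
  let M := c.compMultilinearMap (PiTensorProduct.mapMultilinear ℂ
    (fun _ : Fin r => EuclideanSpace ℂ (Fin d)) (fun _ : Fin r => EuclideanSpace ℂ (Fin d)))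
  have hM : ∀ b, M b = c (PiTensorProduct.map b) := fun b => rfl
  have hM0 : ∀ a, (M fun _ => a) = 0 := by
    apply diag_zero_of_unitary
    intro u
    rw [hM, hc, sub_eq_zero]
    exact ht u
  -- average over the symmetric group
  have havg : ∀ s : Module.End ℂ (⨂[ℂ] _ : Fin r, EuclideanSpace ℂ (Fin d)),
      c (∑ σ : Equiv.Perm (Fin r), permHom r d σ⁻¹ * s * permHom r d σ) = 0 := by
    intro s
    induction map_span s using Submodule.span_induction with
    | mem x hx =>
      obtain ⟨b, rfl⟩ := hx
      simp only [permHom_conj, map_sum, ← hM]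
      exact symm_zero_of_diag M hM0 b
    | zero => simp
    | add x y _ _ hx hy =>
      simp only [mul_add, add_mul, Finset.sum_add_distrib]
      rw [map_add, hx, hy, add_zero]
    | smul k x _ hx =>
      simp only [mul_smul_comm, smul_mul_assoc, ← Finset.smul_sum]
      rw [map_smul, hx, smul_zero]
  intro s hs
  have h1 : ∀ σ : Equiv.Perm (Fin r), permHom r d σ⁻¹ * s * permHom r d σ = s := by
    intro σ
    rw [hs, mul_assoc, ← map_mul, inv_mul_cancel, map_one, mul_one]
  have h2 := havg s
  simp only [h1, Finset.sum_const, map_nsmul] at h2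
  rw [← Nat.cast_smul_eq_nsmul ℂ, smul_eq_zero] at h2
  rcases h2 with h2 | h2
  · simp [Finset.card_univ, Fintype.card_perm, Nat.factorial_ne_zero] at h2
  · rwa [hc, sub_eq_zero] at h2
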